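/- (Functorial Dowker Theorem.) Let f = (f₁, f₂) : (R₀, X₀, Y₀) → (R₁, X₁, Y₁) be a morphism of relations and let f^T = (f₂, f₁) denote the transposed morphism. Let Ψ_{R_i} = |π_{R_i^T}| ∘ |S_{R_i}| ∘ φ_{R_i} : |D(R_i)| → |D(R_i^T)| (i = 0, 1), where φ_{R_i} is a chosen homotopy inverse of |π_{R_i}|. Then each Ψ_{R_i} is a homotopy equivalence and the square commutes up to homotopy: |D(f^T)| ∘ Ψ_{R₀} is homotopic to Ψ_{R₁} ∘ |D(f)| as maps |D(R₀)| → |D(R₁^T)|. -/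

import Mathlib

/-!
The realization `|K|` carries the topology of pointwise convergence of barycentric coordinates.
Since the coordinates are nonnegative with sum `1`, pointwise convergence controls the mass
outside a finite set, so sums dominated by the coordinates are continuous
(`SCpx.continuous_finsum`). Consequently simplicial maps are continuous
(`SCpx.exists_realizesMap`) and `|K|` is metrizable (`SCpx.metrizable`), hence paracompact.

The core is that `|π_R| : |E(R)| → |D(R)|` is a homotopy equivalence
(`isHomotopyEquivMap_fst`). For `f ∈ |D(R)|`, let `a f` be the renormalized truncation of `f` to
the vertices whose coordinate exceeds a continuous positive threshold, and let `b f` be weights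
on `Y`, obtained from a partition of unity, supported on common witnesses of those vertices.
Then `g f = a f ⊗ b f` is supported on a rectangle contained in `R`. The support of `π (g f)` is
contained in that of `f`, so `π ∘ g` is homotopic to the identity along straight lines. For
`e ∈ |E(R)|` with marginals `p` and `q`, the points `e` and `a p ⊗ q` lie in a common rectangle,
and so do `a p ⊗ q` and `a p ⊗ b p = g (π e)`; two straight-line homotopies give `g ∘ π ≃ id`.

So `Ψ_R` is a composite of homotopy equivalences. For naturality, let `E(f) = f₁ × f₂` be the
induced map of rectangle complexes; it commutes strictly with the projections and swaps, and
`φ₁ ∘ |D(f)| ≃ φ₁ ∘ |D(f)| ∘ π₀ ∘ φ₀ = φ₁ ∘ π₁ ∘ |E(f)| ∘ φ₀ ≃ |E(f)| ∘ φ₀`.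
-/


open scoped Classical

/-- An abstract simplicial complex on a vertex type `V`: a set of finite subsets of `V`
(the simplices) closed under inclusions. -/
structure SCpx (V : Type*) where
  faces : Set (Finset V)
  down_closed : ∀ ⦃s t : Finset V⦄, s ∈ faces → t ⊆ s → t ∈ faces

/-- A vertex map `F` is a simplicial map from `K` to `K'` if it maps simplices to simplices. -/
def IsSimplicialMap {V V' : Type*} (K : SCpx V) (K' : SCpx V') (F : V → V') : Prop :=
  ∀ ⦃s : Finset V⦄, s ∈ K.faces → s.image F ∈ K'.faces

/-- The geometric realization `|K|` of a simplicial complex `K`, realized as the subspace of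
`V → ℝ` of barycentric coordinate functions: nonnegative, supported on a simplex, summing to 1. -/
def SCpx.space {V : Type*} (K : SCpx V) : Set (V → ℝ) :=
  {f | (∀ v, 0 ≤ f v) ∧ (∃ s ∈ K.faces, ∀ v, f v ≠ 0 → v ∈ s) ∧ ∑ᶠ v, f v = 1}

/-- The pushforward of barycentric coordinates along a vertex map: the underlying function of
the induced map `|F|` on geometric realizations. -/
noncomputable def pushforward {V V' : Type*} (F : V → V') (f : V → ℝ) : V' → ℝ :=
  fun w => ∑ᶠ v ∈ F ⁻¹' {w}, f v

/-- `h : |K| → |K'|` is the continuous map induced by the vertex map `F`. -/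
def RealizesMap {V V' : Type*} (K : SCpx V) (K' : SCpx V') (F : V → V')
    (h : C(K.space, K'.space)) : Prop :=
  ∀ p : K.space, (h p : V' → ℝ) = pushforward F (p : V → ℝ)

/-- A continuous map is a homotopy equivalence if it has a two-sided homotopy inverse. -/
def IsHomotopyEquivMap {A B : Type*} [TopologicalSpace A] [TopologicalSpace B]
    (f : C(A, B)) : Prop :=
  ∃ g : C(B, A), (f.comp g).Homotopic (ContinuousMap.id B) ∧
    (g.comp f).Homotopic (ContinuousMap.id A)

/-- The Dowker complex of a relation `R ⊆ X × Y`: simplices are the finite subsets of `X`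
witnessed by some `y ∈ Y`. -/
def dowker {X Y : Type*} (R : Set (X × Y)) : SCpx X where
  faces := {σ : Finset X | ∃ y : Y, ∀ x ∈ σ, (x, y) ∈ R}
  down_closed := by
    rintro s t ⟨y, hy⟩ hts
    exact ⟨y, fun x hx => hy x (hts hx)⟩

/-- The rectangle complex of a relation `R ⊆ X × Y`: simplices are the finite subsets `τ` of `R`
with `π_R(τ) × π̂_R(τ) ⊆ R`, i.e. the finite subsets of rectangles contained in `R`. -/
def rect {X Y : Type*} (R : Set (X × Y)) : SCpx (X × Y) where
  faces := {τ : Finset (X × Y) | ∀ p ∈ τ, ∀ q ∈ τ, (p.1, q.2) ∈ R}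
  down_closed := fun _ _ hs hts p hp q hq => hs p (hts hp) q (hts hq)

/-- The transpose relation `R^T ⊆ Y × X` of a relation `R ⊆ X × Y`. -/
def transpose {X Y : Type*} (R : Set (X × Y)) : Set (Y × X) :=
  {q | (q.2, q.1) ∈ R}

/-- The fiber `F/σ = {τ ∈ K | F(τ) ⊆ σ}` of a simplicial map, as a subcomplex of `K`. -/
def fiberCpx {V V' : Type*} (K : SCpx V) (F : V → V') (σ : Finset V') : SCpx V where
  faces := {t | t ∈ K.faces ∧ t.image F ⊆ σ}
  down_closed := fun _ _ hs hts =>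
    ⟨K.down_closed hs.1 hts, (Finset.image_subset_image hts).trans hs.2⟩

/-! ### Points of the realization -/

section Realization

variable {V V' V'' : Type*}

lemma SCpx.finite_support {K : SCpx V} (f : K.space) : (Function.support f.1).Finite := by
  obtain ⟨s, -, hs⟩ := f.2.2.1
  exact s.finite_toSet.subset fun v hv => hs v hv

lemma SCpx.sum_eq_one {K : SCpx V} (f : K.space) (s : Finset V) (hs : ∀ v, f.1 v ≠ 0 → v ∈ s) :
    ∑ v ∈ s, f.1 v = 1 := by
  rw [← f.2.2.2, finsum_eq_sum_of_support_subset]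
  exact fun v hv => hs v hv

lemma SCpx.sum_le_one {K : SCpx V} (f : K.space) (s : Finset V) : ∑ v ∈ s, f.1 v ≤ 1 := by
  rw [← SCpx.sum_eq_one f (s ∪ (SCpx.finite_support f).toFinset) (by simp +contextual)]
  exact Finset.sum_le_sum_of_subset_of_nonneg Finset.subset_union_left fun v _ _ => f.2.1 v

@[fun_prop]
lemma SCpx.continuous_coord (K : SCpx V) (v : V) : Continuous fun f : K.space => f.1 v :=
  (continuous_apply v).comp continuous_subtype_val

lemma SCpx.exists_pos {K : SCpx V} (f : K.space) : ∃ v, 0 < f.1 v := by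
  by_contra! h
  have h0 : ∀ v, f.1 v = 0 := fun v => le_antisymm (h v) (f.2.1 v)
  have := f.2.2.2
  simp [h0] at this

/-- The analytic input: sums dominated by the barycentric coordinates depend continuously on the
point. Near `f₀`, supported in `s`, the mass `1 - ∑ v ∈ s, f v` outside `s` is small, so the
infinitely many coordinates outside `s` contribute little. -/
lemma SCpx.continuous_finsum (K : SCpx V) (c : V → K.space → ℝ) (hc : ∀ v, Continuous (c v))
    (hb : ∀ v f, |c v f| ≤ f.1 v) : Continuous fun f => ∑ᶠ v, c v f := by
  rw [continuous_iff_continuousAt]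
  intro f₀
  set s := (SCpx.finite_support f₀).toFinset with hs
  have hz : ∀ (f : K.space) v, f.1 v = 0 → c v f = 0 := fun f v hv =>
    abs_nonpos_iff.1 ((hb v f).trans hv.le)
  have bound : ∀ f : K.space, |∑ᶠ v, c v f - ∑ᶠ v, c v f₀| ≤
      ∑ v ∈ s, |c v f - c v f₀| + (1 - ∑ v ∈ s, f.1 v) := by
    intro f
    set t := (SCpx.finite_support f).toFinset with ht
    have h1 : ∑ᶠ v, c v f = ∑ v ∈ s ∪ t, c v f := by
      refine finsum_eq_sum_of_support_subset _ fun v hv => ?_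
      have : f.1 v ≠ 0 := fun h => hv (hz f v h)
      simp [ht, this]
    have h2 : ∑ᶠ v, c v f₀ = ∑ v ∈ s, c v f₀ := by
      refine finsum_eq_sum_of_support_subset _ fun v hv => ?_
      have : f₀.1 v ≠ 0 := fun h => hv (hz f₀ v h)
      simp [hs, this]
    have h3 : ∑ v ∈ s ∪ t, f.1 v = 1 := SCpx.sum_eq_one f _ (by simp +contextual [ht])
    rw [← Finset.sum_sdiff (Finset.subset_union_left (s₁ := s) (s₂ := t))] at h1 h3
    have h4 : |∑ v ∈ (s ∪ t) \ s, c v f| ≤ ∑ v ∈ (s ∪ t) \ s, f.1 v :=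
      (Finset.abs_sum_le_sum_abs _ _).trans (Finset.sum_le_sum fun v _ => hb v f)
    have h5 : |∑ v ∈ s, (c v f - c v f₀)| ≤ ∑ v ∈ s, |c v f - c v f₀| :=
      Finset.abs_sum_le_sum_abs _ _
    rw [h1, h2]
    calc _ = |∑ v ∈ s, (c v f - c v f₀) + ∑ v ∈ (s ∪ t) \ s, c v f| := by
            rw [Finset.sum_sub_distrib]; congr 1; ring
      _ ≤ _ := abs_add_le _ _
      _ ≤ _ := by linarith
  have hlim : Filter.Tendsto (fun f : K.space =>
      ∑ v ∈ s, |c v f - c v f₀| + (1 - ∑ v ∈ s, f.1 v)) (nhds f₀) (nhds 0) := by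
    have hcont : Continuous (fun f : K.space =>
        ∑ v ∈ s, |c v f - c v f₀| + (1 - ∑ v ∈ s, f.1 v)) :=
      (continuous_finsetSum _ fun v _ => ((hc v).sub continuous_const).abs).add
        (continuous_const.sub (continuous_finsetSum _ fun v _ => K.continuous_coord v))
    have h0 := hcont.tendsto f₀
    have h1 : ∑ v ∈ s, f₀.1 v = 1 := SCpx.sum_eq_one f₀ _ (by simp [hs])
    simpa [h1] using h0
  unfold ContinuousAt
  rw [tendsto_iff_dist_tendsto_zero]
  exact squeeze_zero (fun _ => dist_nonneg) bound hlim

lemma SCpx.continuous_finsum_mem (K : SCpx V) (S : Set V) :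
    Continuous fun f : K.space => ∑ᶠ v ∈ S, f.1 v := by
  have := K.continuous_finsum (fun v f => ∑ᶠ _ : v ∈ S, f.1 v) (fun v => ?_) (fun v f => ?_)
  · exact this
  · by_cases h : v ∈ S
    · simpa only [h, finsum_true] using K.continuous_coord v
    · simp only [h, finsum_false]; fun_prop
  · by_cases h : v ∈ S
    · simp [h, abs_of_nonneg (f.2.1 v)]
    · simp [h, f.2.1 v]

/-- Pointwise convergence of barycentric coordinates is uniform, because single coordinates are
controlled by the mass outside a finite set. Hence `|K|` is metrizable although `V` may be
uncountable. -/
lemma SCpx.metrizable (K : SCpx V) : TopologicalSpace.MetrizableSpace K.space := by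
  have hcg : (uniformity (UniformFun V ℝ)).IsCountablyGenerated :=
    (UniformFun.hasBasis_uniformity_of_basis V ℝ
      Metric.uniformity_basis_dist_inv_nat_succ).isCountablyGenerated
  have : TopologicalSpace.MetrizableSpace (UniformFun V ℝ) := UniformSpace.metrizableSpace
  let ι : K.space → UniformFun V ℝ := fun f => UniformFun.ofFun f.1
  have hι : Continuous ι := by
    rw [continuous_iff_continuousAt]
    intro f₀
    unfold ContinuousAt
    rw [UniformFun.tendsto_iff_tendstoUniformly, Metric.tendstoUniformly_iff]
    intro ε hε
    set s := (SCpx.finite_support f₀).toFinset with hs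
    have hcont : Continuous (fun f : K.space =>
        ∑ v ∈ s, |f.1 v - f₀.1 v| + (1 - ∑ v ∈ s, f.1 v)) :=
      (continuous_finsetSum _ fun v _ => ((K.continuous_coord v).sub continuous_const).abs).add
        (continuous_const.sub (continuous_finsetSum _ fun v _ => K.continuous_coord v))
    have h1 : ∑ v ∈ s, f₀.1 v = 1 := SCpx.sum_eq_one f₀ _ (by simp [hs])
    have h2 := hcont.continuousAt.eventually_lt (x₀ := f₀) (g := fun _ => ε)
      continuousAt_const (by simpa [h1] using hε)
    filter_upwards [h2] with f hf v
    have hle := SCpx.sum_le_one f s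
    have hnn : 0 ≤ ∑ v ∈ s, |f.1 v - f₀.1 v| := Finset.sum_nonneg fun _ _ => abs_nonneg _
    change dist (f₀.1 v) (f.1 v) < ε
    rw [dist_comm, Real.dist_eq]
    by_cases hv : v ∈ s
    · have := Finset.single_le_sum (f := fun v => |f.1 v - f₀.1 v|)
        (fun _ _ => abs_nonneg _) hv
      linarith
    · have h3 := SCpx.sum_le_one f (insert v s)
      rw [Finset.sum_insert hv] at h3
      have h4 : f₀.1 v = 0 := by simpa [hs] using hv
      rw [h4, sub_zero, abs_of_nonneg (f.2.1 v)]
      linarith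
  have hind : Topology.IsInducing ι :=
    Topology.IsInducing.of_comp hι (g := UniformFun.toFun)
      UniformFun.uniformContinuous_toFun.continuous Topology.IsInducing.subtypeVal
  have hemb : Topology.IsEmbedding ι := ⟨hind, fun f g h => Subtype.ext h⟩
  exact hemb.metrizableSpace

/-- Straight-line homotopy: two maps into `|K|` that are contiguous, i.e. whose values at each
point lie in a common simplex, are homotopic. -/
lemma SCpx.homotopic_of_contiguous {A : Type*} [TopologicalSpace A] {K : SCpx V}
    (u v : C(A, K.space))
    (h : ∀ a, ∃ s ∈ K.faces, ∀ w, (u a).1 w ≠ 0 ∨ (v a).1 w ≠ 0 → w ∈ s) :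
    u.Homotopic v := by
  have hmem : ∀ p : unitInterval × A,
      (fun w => (1 - (p.1 : ℝ)) * (u p.2).1 w + (p.1 : ℝ) * (v p.2).1 w) ∈ K.space := by
    rintro ⟨t, a⟩
    obtain ⟨s, hs, hsup⟩ := h a
    have hsupp : ∀ w, (1 - (t : ℝ)) * (u a).1 w + (t : ℝ) * (v a).1 w ≠ 0 → w ∈ s := by
      intro w hw
      apply hsup
      by_contra! hc
      simp [hc.1, hc.2] at hw
    refine ⟨fun w => ?_, ⟨s, hs, hsupp⟩, ?_⟩
    · exact add_nonneg (mul_nonneg (by linarith [t.2.2]) ((u a).2.1 w))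
        (mul_nonneg t.2.1 ((v a).2.1 w))
    · dsimp only
      rw [finsum_eq_sum_of_support_subset _ (s := s) (fun w hw => hsupp w hw),
        Finset.sum_add_distrib, ← Finset.mul_sum, ← Finset.mul_sum,
        SCpx.sum_eq_one (u a) s fun w hw => hsup w (Or.inl hw),
        SCpx.sum_eq_one (v a) s fun w hw => hsup w (Or.inr hw)]
      ring
  refine ⟨⟨⟨fun p => ⟨_, hmem p⟩, ?_⟩, ?_, ?_⟩⟩
  · refine Continuous.subtype_mk (continuous_pi fun w => ?_) _
    have h1 : Continuous fun p : unitInterval × A => (u p.2).1 w :=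
      (continuous_apply w).comp (continuous_subtype_val.comp (u.continuous.comp continuous_snd))
    have h2 : Continuous fun p : unitInterval × A => (v p.2).1 w :=
      (continuous_apply w).comp (continuous_subtype_val.comp (v.continuous.comp continuous_snd))
    have h0 : Continuous fun p : unitInterval × A => (p.1 : ℝ) :=
      continuous_subtype_val.comp continuous_fst
    exact ((continuous_const.sub h0).mul h1).add (h0.mul h2)
  · intro a
    apply Subtype.ext
    funext w
    simp
  · intro a
    apply Subtype.ext
    funext w
    simp

/-! ### Induced maps -/

lemma pushforward_eq_mapDomain (F : V → V') (f : V →₀ ℝ) :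
    pushforward F f = f.mapDomain F := by
  funext w
  rw [Finsupp.mapDomain, Finsupp.sum_apply, Finsupp.sum, pushforward]
  rw [finsum_mem_def, finsum_eq_sum_of_support_subset _ (s := f.support)]
  · refine Finset.sum_congr rfl fun v _ => ?_
    simp [Finsupp.single_apply, Set.indicator_apply]
  · intro v hv
    simp only [Function.mem_support, Set.indicator_apply] at hv
    simp only [Finset.mem_coe, Finsupp.mem_support_iff]
    intro h
    simp [h] at hv

lemma SCpx.pushforward_comp {K : SCpx V} (F : V → V') (G : V' → V'') (f : K.space) :
    pushforward G (pushforward F f.1) = pushforward (G ∘ F) f.1 := by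
  have h := pushforward_eq_mapDomain F (Finsupp.ofSupportFinite f.1 (SCpx.finite_support f))
  have h' := pushforward_eq_mapDomain (G ∘ F)
    (Finsupp.ofSupportFinite f.1 (SCpx.finite_support f))
  rw [Finsupp.ofSupportFinite_coe] at h h'
  rw [h, h', pushforward_eq_mapDomain, Finsupp.mapDomain_comp]

lemma SCpx.pushforward_id {K : SCpx V} (f : K.space) : pushforward id f.1 = f.1 := by
  funext w
  simp [pushforward]

lemma exists_of_pushforward_ne_zero {F : V → V'} {f : V → ℝ} {w : V'}
    (h : pushforward F f w ≠ 0) : ∃ v, F v = w ∧ f v ≠ 0 := by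
  obtain ⟨v, hv, hv0⟩ := exists_ne_zero_of_finsum_mem_ne_zero h
  exact ⟨v, hv, hv0⟩

/-- A simplicial vertex map induces a continuous map of realizations. Simpliciality is phrased as
every simplex being mapped into some simplex, which avoids decidable equality on the vertices. -/
lemma SCpx.exists_realizesMap (K : SCpx V) (K' : SCpx V') (F : V → V')
    (hF : ∀ s ∈ K.faces, ∃ t ∈ K'.faces, ∀ v ∈ s, F v ∈ t) :
    ∃ h : C(K.space, K'.space), RealizesMap K K' F h := by
  have hmem : ∀ f : K.space, pushforward F f.1 ∈ K'.space := by
    intro f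
    obtain ⟨s, hs, hsup⟩ := f.2.2.1
    obtain ⟨t, ht, hst⟩ := hF s hs
    have hsupp : ∀ w, pushforward F f.1 w ≠ 0 → w ∈ t := by
      intro w hw
      obtain ⟨v, rfl, hv⟩ := exists_of_pushforward_ne_zero hw
      exact hst v (hsup v hv)
    refine ⟨fun w => finsum_nonneg fun v => finsum_nonneg fun _ => f.2.1 v,
      ⟨t, ht, hsupp⟩, ?_⟩
    rw [finsum_eq_sum_of_support_subset _ (s := t) (fun w hw => hsupp w hw),
      ← SCpx.sum_eq_one f s hsup,
      ← Finset.sum_fiberwise_of_maps_to (g := F) (t := t) hst]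
    refine Finset.sum_congr rfl fun w _ => ?_
    rw [pushforward, finsum_mem_def, finsum_eq_sum_of_support_subset _ (s := s),
      Finset.sum_filter]
    · simp [Set.indicator_apply]
    · intro v hv
      refine hsup v fun h => ?_
      simp [h] at hv
  exact ⟨⟨fun f => ⟨_, hmem f⟩, Continuous.subtype_mk
    (continuous_pi fun w => K.continuous_finsum_mem _) _⟩, fun _ => rfl⟩

end Realization

/-! ### Dowker duality -/

section Dowker

variable {X Y : Type*}

/-- The full simplex on `V`: every finite subset is a simplex. -/
def fullSimplex (V : Type*) : SCpx V where
  faces := Set.univ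
  down_closed := fun _ _ _ _ => Set.mem_univ _

/-- Product weights: two families of probability weights whose supports span rectangles
contained in `R` give a map into the realization of the rectangle complex. -/
lemma exists_product {A : Type*} [TopologicalSpace A] {R : Set (X × Y)} {K : SCpx X} {L : SCpx Y}
    (a : C(A, K.space)) (b : C(A, L.space))
    (h : ∀ t x y, (a t).1 x ≠ 0 → (b t).1 y ≠ 0 → (x, y) ∈ R) :
    ∃ u : C(A, (rect R).space), ∀ t p, (u t).1 p = (a t).1 p.1 * (b t).1 p.2 := by
  have hmem : ∀ t, (fun p : X × Y => (a t).1 p.1 * (b t).1 p.2) ∈ (rect R).space := by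
    intro t
    set s₁ := (SCpx.finite_support (a t)).toFinset with hs₁
    set s₂ := (SCpx.finite_support (b t)).toFinset with hs₂
    have hsupp : ∀ p : X × Y, (a t).1 p.1 * (b t).1 p.2 ≠ 0 → p ∈ s₁ ×ˢ s₂ := by
      intro p hp
      simpa [hs₁, hs₂, Finset.mem_product] using hp
    refine ⟨fun p => mul_nonneg ((a t).2.1 _) ((b t).2.1 _), ⟨s₁ ×ˢ s₂, ?_, hsupp⟩, ?_⟩
    · intro p hp q hq
      simp only [hs₁, hs₂, Finset.mem_product, Set.Finite.mem_toFinset,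
        Function.mem_support] at hp hq
      exact h t _ _ hp.1 hq.2
    · rw [finsum_eq_sum_of_support_subset _ (s := s₁ ×ˢ s₂) (fun p hp => hsupp p hp),
        Finset.sum_product]
      dsimp only
      rw [← Finset.sum_mul_sum, SCpx.sum_eq_one (a t) s₁ (by simp [hs₁]),
        SCpx.sum_eq_one (b t) s₂ (by simp [hs₂]), one_mul]
  refine ⟨⟨fun t => ⟨_, hmem t⟩, Continuous.subtype_mk (continuous_pi fun p => ?_) _⟩,
    fun _ _ => rfl⟩
  have h1 : Continuous fun t => (a t).1 p.1 :=
    (continuous_apply p.1).comp (continuous_subtype_val.comp a.continuous)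
  have h2 : Continuous fun t => (b t).1 p.2 :=
    (continuous_apply p.2).comp (continuous_subtype_val.comp b.continuous)
  exact h1.mul h2

/-- A threshold for `f`: half of `∑ x, f x ^ 2`. It is positive, continuous in `f`, and strictly
below the largest coordinate of `f`. -/
noncomputable def threshold {K : SCpx X} (f : K.space) : ℝ := (∑ᶠ x, f.1 x ^ 2) / 2

lemma SCpx.le_one {K : SCpx X} (f : K.space) (x : X) : f.1 x ≤ 1 := by
  simpa using SCpx.sum_le_one f {x}

lemma continuous_threshold (K : SCpx X) : Continuous (threshold (K := K)) := by
  refine (K.continuous_finsum (fun x f => f.1 x ^ 2) (fun x => (K.continuous_coord x).pow 2) ?_).div_const 2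
  intro x f
  rw [abs_of_nonneg (sq_nonneg _)]
  nlinarith [f.2.1 x, SCpx.le_one f x]

lemma finsum_sq_eq {K : SCpx X} (f : K.space) :
    ∑ᶠ x, f.1 x ^ 2 = ∑ x ∈ (SCpx.finite_support f).toFinset, f.1 x ^ 2 := by
  refine finsum_eq_sum_of_support_subset _ fun x hx => ?_
  simpa using hx

lemma threshold_pos {K : SCpx X} (f : K.space) : 0 < threshold f := by
  obtain ⟨x, hx⟩ := SCpx.exists_pos f
  refine div_pos ?_ two_pos
  rw [finsum_sq_eq]
  exact Finset.sum_pos' (fun _ _ => sq_nonneg _) ⟨x, by simpa using hx.ne', by positivity⟩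

lemma exists_threshold_lt {K : SCpx X} (f : K.space) : ∃ x, threshold f < f.1 x := by
  by_contra! h
  have h1 : ∑ᶠ x, f.1 x ^ 2 ≤ threshold f := by
    rw [finsum_sq_eq]
    calc _ ≤ ∑ x ∈ (SCpx.finite_support f).toFinset, threshold f * f.1 x :=
          Finset.sum_le_sum fun x _ => by nlinarith [h x, f.2.1 x]
      _ = _ := by rw [← Finset.mul_sum, SCpx.sum_eq_one f _ (by simp), mul_one]
  have h2 := threshold_pos f
  unfold threshold at h1 h2
  linarith

/-- Truncation: keep only the vertices whose coordinate exceeds the threshold, and renormalize. -/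
lemma exists_truncation (K : SCpx X) :
    ∃ a : C(K.space, K.space), ∀ f x, (a f).1 x ≠ 0 → threshold f < f.1 x := by
  let c : X → K.space → ℝ := fun x f => max 0 (f.1 x - threshold f)
  have hc : ∀ x, Continuous (c x) := fun x =>
    continuous_const.max ((K.continuous_coord x).sub (continuous_threshold K))
  have hc0 : ∀ x f, 0 ≤ c x f := fun x f => le_max_left _ _
  have hcne : ∀ x f, c x f ≠ 0 → threshold f < f.1 x := by
    intro x f h
    by_contra! h'
    exact h (max_eq_left (by linarith))
  have hcle : ∀ x f, c x f ≤ f.1 x := fun x f =>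
    max_le (f.2.1 x) (by linarith [threshold_pos f])
  have hN : Continuous fun f => ∑ᶠ x, c x f :=
    K.continuous_finsum c hc fun x f => by rw [abs_of_nonneg (hc0 x f)]; exact hcle x f
  have hfin : ∀ f, ∑ᶠ x, c x f = ∑ x ∈ (SCpx.finite_support f).toFinset, c x f := by
    intro f
    refine finsum_eq_sum_of_support_subset _ fun x hx => ?_
    have : f.1 x ≠ 0 := ((threshold_pos f).trans (hcne x f hx)).ne'
    simpa using this
  have hNpos : ∀ f, 0 < ∑ᶠ x, c x f := by
    intro f
    obtain ⟨x, hx⟩ := exists_threshold_lt f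
    rw [hfin]
    refine Finset.sum_pos' (fun x _ => hc0 x f) ⟨x, ?_, ?_⟩
    · simpa using ((threshold_pos f).trans hx).ne'
    · exact lt_max_of_lt_right (by linarith)
  have hmem : ∀ f, (fun x => c x f / ∑ᶠ x, c x f) ∈ K.space := by
    intro f
    obtain ⟨s, hs, hsup⟩ := f.2.2.1
    refine ⟨fun x => div_nonneg (hc0 x f) (hNpos f).le, ⟨s, hs, fun x hx => hsup x ?_⟩, ?_⟩
    · have : c x f ≠ 0 := fun h => hx (by simp [h])
      exact ((threshold_pos f).trans (hcne x f this)).ne'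
    · simp only [div_eq_mul_inv]
      rw [← finsum_mul' , mul_inv_cancel₀ (hNpos f).ne']
      refine (SCpx.finite_support f).subset fun x hx => ?_
      exact ((threshold_pos f).trans (hcne x f hx)).ne'
  refine ⟨⟨fun f => ⟨_, hmem f⟩, Continuous.subtype_mk (continuous_pi fun x => ?_) _⟩, ?_⟩
  · exact (hc x).div hN fun f => (hNpos f).ne'
  · intro f x hx
    refine hcne x f fun h => hx ?_
    change c x f / _ = 0
    rw [h, zero_div]

/-- Continuous choice of witnesses: a partition of unity subordinate to the open sets
`U y = {f | ∑ x with (x, y) ∉ R, f x < threshold f}`. On `U y` the element `y` is a witness for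
all vertices above the threshold, and the sets `U y` cover because a witness for the support of
`f` makes the sum vanish. -/
lemma exists_witnesses (R : Set (X × Y)) :
    ∃ b : C((dowker R).space, (fullSimplex Y).space), ∀ f x y,
      threshold f < f.1 x → (b f).1 y ≠ 0 → (x, y) ∈ R := by
  have := (dowker R).metrizable
  let := TopologicalSpace.metrizableSpaceMetric (dowker R).space
  let U : Y → Set (dowker R).space := fun y =>
    {f | ∑ᶠ x ∈ {x | (x, y) ∉ R}, f.1 x < threshold f}
  have hU : ∀ y, IsOpen (U y) := fun y =>
    isOpen_lt ((dowker R).continuous_finsum_mem _) (continuous_threshold _)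
  have hcov : Set.univ ⊆ ⋃ y, U y := by
    intro f _
    obtain ⟨s, ⟨y, hy⟩, hsup⟩ := f.2.2.1
    refine Set.mem_iUnion.2 ⟨y, ?_⟩
    change ∑ᶠ x ∈ {x | (x, y) ∉ R}, f.1 x < threshold f
    rw [finsum_mem_of_eqOn_zero]
    · exact threshold_pos f
    · intro x hx
      by_contra h
      exact hx (hy x (hsup x h))
  obtain ⟨ρ, hρ⟩ := PartitionOfUnity.exists_isSubordinate isClosed_univ U hU hcov
  have hmem : ∀ f, (fun y => ρ y f) ∈ (fullSimplex Y).space := by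
    intro f
    refine ⟨fun y => ρ.nonneg y f, ⟨(ρ.locallyFinite.point_finite f).toFinset,
      Set.mem_univ _, fun y hy => ?_⟩, ρ.sum_eq_one (Set.mem_univ f)⟩
    simpa using hy
  refine ⟨⟨fun f => ⟨_, hmem f⟩, Continuous.subtype_mk
    (continuous_pi fun y => (ρ y).continuous) _⟩, ?_⟩
  intro f x y hx hy
  have hf : f ∈ U y := hρ y (subset_tsupport _ hy)
  by_contra hxy
  refine (lt_irrefl (threshold f)) (hx.trans_le (le_trans ?_ (le_of_lt hf)))
  rw [finsum_mem_def]
  have hfs : (Function.support ({x | (x, y) ∉ R}.indicator f.1)).Finite :=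
    (SCpx.finite_support f).subset (by simp)
  have h1 := single_le_finsum x hfs fun z => Set.indicator_nonneg (fun z _ => f.2.1 z) z
  rwa [Set.indicator_of_mem (show x ∈ {x | (x, y) ∉ R} from hxy)] at h1

/-- Dowker's theorem for the rectangle complex: `|π_R|` is a homotopy equivalence. Its inverse
sends `f` to the product of the truncation of `f` with its weights on witnesses. -/
lemma isHomotopyEquivMap_fst (R : Set (X × Y)) (p : C((rect R).space, (dowker R).space))
    (hp : RealizesMap (rect R) (dowker R) Prod.fst p) : IsHomotopyEquivMap p := by
  obtain ⟨a, ha⟩ := exists_truncation (dowker R)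
  obtain ⟨b, hb⟩ := exists_witnesses R
  have ha' : ∀ f x, (a f).1 x ≠ 0 → f.1 x ≠ 0 := fun f x h =>
    ((threshold_pos f).trans (ha f x h)).ne'
  obtain ⟨g, hg⟩ := exists_product (R := R) a b fun f x y hx hy => hb f x y (ha f x hx) hy
  obtain ⟨q, hq⟩ := (rect R).exists_realizesMap (fullSimplex Y) Prod.snd
    fun s _ => ⟨s.image Prod.snd, Set.mem_univ _, fun _ => Finset.mem_image_of_mem _⟩
  have hp0 : ∀ e x, (p e).1 x ≠ 0 → ∃ v, v.1 = x ∧ e.1 v ≠ 0 := fun e x h =>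
    exists_of_pushforward_ne_zero (hp e ▸ h)
  have hq0 : ∀ e y, (q e).1 y ≠ 0 → ∃ v, v.2 = y ∧ e.1 v ≠ 0 := fun e y h =>
    exists_of_pushforward_ne_zero (hq e ▸ h)
  have hpq : ∀ e x y, (p e).1 x ≠ 0 → (q e).1 y ≠ 0 → (x, y) ∈ R := by
    intro e x y hx hy
    obtain ⟨s, hs, hsup⟩ := e.2.2.1
    obtain ⟨v, rfl, hv⟩ := hp0 e x hx
    obtain ⟨w, rfl, hw⟩ := hq0 e y hy
    exact hs v (hsup v hv) w (hsup w hw)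
  -- the intermediate map truncates the first marginal and keeps the second one
  obtain ⟨m, hm⟩ := exists_product (R := R) (a.comp p) q fun e x y hx hy =>
    hpq e x y (ha' _ _ hx) hy
  refine ⟨g, SCpx.homotopic_of_contiguous _ _ fun f => ?_, ?_⟩
  · obtain ⟨s, hs, hsup⟩ := f.2.2.1
    refine ⟨s, hs, fun x hx => hsup x ?_⟩
    rcases hx with hx | hx
    · obtain ⟨v, rfl, hv⟩ := hp0 (g f) x hx
      rw [hg] at hv
      exact ha' f _ (left_ne_zero_of_mul hv)
    · exact hx
  · refine ContinuousMap.Homotopic.trans (g := m)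
      (SCpx.homotopic_of_contiguous _ _ fun e => ?_) (SCpx.homotopic_of_contiguous _ _ fun e => ?_)
    · -- both values lie in the rectangle spanned by the two marginals and the weights on witnesses
      refine ⟨(SCpx.finite_support (a (p e))).toFinset ×ˢ
        ((SCpx.finite_support (q e)).toFinset ∪ (SCpx.finite_support (b (p e))).toFinset),
        ?_, ?_⟩
      · intro v hv w hw
        simp only [Finset.mem_product, Finset.mem_union, Set.Finite.mem_toFinset,
          Function.mem_support] at hv hw
        rcases hw.2 with h | h
        · exact hpq e _ _ (ha' _ _ hv.1) h
        · exact hb (p e) _ _ (ha _ _ hv.1) h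
      · intro w hw
        simp only [Finset.mem_product, Finset.mem_union, Set.Finite.mem_toFinset,
          Function.mem_support]
        rcases hw with hw | hw
        · have hw' : (a (p e)).1 w.1 * (b (p e)).1 w.2 ≠ 0 := hg (p e) w ▸ hw
          exact ⟨left_ne_zero_of_mul hw', Or.inr (right_ne_zero_of_mul hw')⟩
        · have hw' : (a (p e)).1 w.1 * (q e).1 w.2 ≠ 0 := hm e w ▸ hw
          exact ⟨left_ne_zero_of_mul hw', Or.inl (right_ne_zero_of_mul hw')⟩
    · -- both values lie in the rectangle spanned by the simplex carrying `e`
      obtain ⟨s, hs, hsup⟩ := e.2.2.1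
      refine ⟨s.image Prod.fst ×ˢ s.image Prod.snd, ?_, ?_⟩
      · intro v hv w hw
        rw [Finset.mem_product, Finset.mem_image, Finset.mem_image] at hv hw
        obtain ⟨v', hv', hv1⟩ := hv.1
        obtain ⟨w', hw', hw2⟩ := hw.2
        rw [← hv1, ← hw2]
        exact hs v' hv' w' hw'
      · intro w hw
        rw [Finset.mem_product]
        rcases hw with hw | hw
        · have hw' : (a (p e)).1 w.1 * (q e).1 w.2 ≠ 0 := hm e w ▸ hw
          obtain ⟨v, hv1, hv⟩ := hp0 e _ (ha' _ _ (left_ne_zero_of_mul hw'))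
          obtain ⟨v', hv2, hv'⟩ := hq0 e _ (right_ne_zero_of_mul hw')
          rw [← hv1, ← hv2]
          exact ⟨Finset.mem_image_of_mem _ (hsup v hv), Finset.mem_image_of_mem _ (hsup v' hv')⟩
        · exact ⟨Finset.mem_image_of_mem _ (hsup w hw), Finset.mem_image_of_mem _ (hsup w hw)⟩

lemma isHomotopyEquivMap_swap (R : Set (X × Y))
    (S : C((rect R).space, (rect (transpose R)).space))
    (hS : RealizesMap (rect R) (rect (transpose R)) Prod.swap S) : IsHomotopyEquivMap S := by
  obtain ⟨T, hT⟩ := (rect (transpose R)).exists_realizesMap (rect R) Prod.swap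
    fun s hs => ⟨s.image Prod.swap, fun v hv w hw => by
      rw [Finset.mem_image] at hv hw
      obtain ⟨v, hv, rfl⟩ := hv
      obtain ⟨w, hw, rfl⟩ := hw
      exact hs w hw v hv, fun _ => Finset.mem_image_of_mem _⟩
  have h1 : S.comp T = ContinuousMap.id _ := by
    ext1 e
    apply Subtype.ext
    change (S (T e)).1 = e.1
    rw [hS, hT, SCpx.pushforward_comp, Prod.swap_swap_eq, SCpx.pushforward_id]
  have h2 : T.comp S = ContinuousMap.id _ := by
    ext1 e
    apply Subtype.ext
    change (T (S e)).1 = e.1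
    rw [hT, hS, SCpx.pushforward_comp, Prod.swap_swap_eq, SCpx.pushforward_id]
  exact ⟨T, h1 ▸ ContinuousMap.Homotopic.refl _, h2 ▸ ContinuousMap.Homotopic.refl _⟩

lemma IsHomotopyEquivMap.comp {A B C : Type*} [TopologicalSpace A] [TopologicalSpace B]
    [TopologicalSpace C] {g : C(B, C)} {f : C(A, B)} (hg : IsHomotopyEquivMap g)
    (hf : IsHomotopyEquivMap f) : IsHomotopyEquivMap (g.comp f) := by
  obtain ⟨g', hg1, hg2⟩ := hg
  obtain ⟨f', hf1, hf2⟩ := hf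
  refine ⟨f'.comp g', ?_, ?_⟩
  · have h : ((g.comp (f.comp f')).comp g').Homotopic ((g.comp (ContinuousMap.id _)).comp g') :=
      .comp (.comp (.refl g) hf1) (.refl g')
    exact h.trans hg1
  · have h : ((f'.comp (g'.comp g)).comp f).Homotopic ((f'.comp (ContinuousMap.id _)).comp f) :=
      .comp (.comp (.refl f') hg2) (.refl f)
    exact h.trans hf2

end Dowker

/-- Functorial Dowker Theorem. Let `f = (f₁, f₂)` be a morphism of
relations `(R₀, X₀, Y₀) → (R₁, X₁, Y₁)`. For `i = 0, 1`, let `Ψ_{R_i} = |π_{R_i^T}| ∘ |S_{R_i}| ∘ φ_{R_i}`,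
where `φ_{R_i}` is a chosen homotopy inverse of `|π_{R_i}|`. Then each `Ψ_{R_i}` is a
homotopy equivalence, and `|D(f^T)| ∘ Ψ_{R₀}` is homotopic to `Ψ_{R₁} ∘ |D(f)|` as maps
`|D(R₀)| → |D(R₁^T)|`. -/
theorem functorial_dowker_theorem {X₀ Y₀ X₁ Y₁ : Type*}
    (R₀ : Set (X₀ × Y₀)) (R₁ : Set (X₁ × Y₁))
    (f₁ : X₀ → X₁) (f₂ : Y₀ → Y₁)
    (hf : ∀ p ∈ R₀, (f₁ p.1, f₂ p.2) ∈ R₁)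
    -- the induced maps `|π_{R_i}|`
    (pE₀ : C((rect R₀).space, (dowker R₀).space))
    (hpE₀ : RealizesMap (rect R₀) (dowker R₀) Prod.fst pE₀)
    (pE₁ : C((rect R₁).space, (dowker R₁).space))
    (hpE₁ : RealizesMap (rect R₁) (dowker R₁) Prod.fst pE₁)
    -- the induced maps `|S_{R_i}|`
    (s₀ : C((rect R₀).space, (rect (transpose R₀)).space))
    (hs₀ : RealizesMap (rect R₀) (rect (transpose R₀)) Prod.swap s₀)
    (s₁ : C((rect R₁).space, (rect (transpose R₁)).space))
    (hs₁ : RealizesMap (rect R₁) (rect (transpose R₁)) Prod.swap s₁)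
    -- the induced maps `|π_{R_i^T}|`
    (pT₀ : C((rect (transpose R₀)).space, (dowker (transpose R₀)).space))
    (hpT₀ : RealizesMap (rect (transpose R₀)) (dowker (transpose R₀)) Prod.fst pT₀)
    (pT₁ : C((rect (transpose R₁)).space, (dowker (transpose R₁)).space))
    (hpT₁ : RealizesMap (rect (transpose R₁)) (dowker (transpose R₁)) Prod.fst pT₁)
    -- chosen homotopy inverses `φ_{R_i}` of `|π_{R_i}|`
    (φ₀ : C((dowker R₀).space, (rect R₀).space))
    (hφ₀l : (pE₀.comp φ₀).Homotopic (ContinuousMap.id _))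
    (hφ₀r : (φ₀.comp pE₀).Homotopic (ContinuousMap.id _))
    (φ₁ : C((dowker R₁).space, (rect R₁).space))
    (hφ₁l : (pE₁.comp φ₁).Homotopic (ContinuousMap.id _))
    (hφ₁r : (φ₁.comp pE₁).Homotopic (ContinuousMap.id _))
    -- the induced maps `|D(f)|` and `|D(f^T)|`
    (dF : C((dowker R₀).space, (dowker R₁).space))
    (hdF : RealizesMap (dowker R₀) (dowker R₁) f₁ dF)
    (dFT : C((dowker (transpose R₀)).space, (dowker (transpose R₁)).space))
    (hdFT : RealizesMap (dowker (transpose R₀)) (dowker (transpose R₁)) f₂ dFT) :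
    IsHomotopyEquivMap (pT₀.comp (s₀.comp φ₀)) ∧
    IsHomotopyEquivMap (pT₁.comp (s₁.comp φ₁)) ∧
    (dFT.comp (pT₀.comp (s₀.comp φ₀))).Homotopic ((pT₁.comp (s₁.comp φ₁)).comp dF) := by
  refine ⟨?_, ?_, ?_⟩
  · exact (isHomotopyEquivMap_fst _ pT₀ hpT₀).comp
      ((isHomotopyEquivMap_swap R₀ s₀ hs₀).comp ⟨pE₀, hφ₀r, hφ₀l⟩)
  · exact (isHomotopyEquivMap_fst _ pT₁ hpT₁).comp
      ((isHomotopyEquivMap_swap R₁ s₁ hs₁).comp ⟨pE₁, hφ₁r, hφ₁l⟩)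
  · obtain ⟨Ef, hEf⟩ := (rect R₀).exists_realizesMap (rect R₁) (Prod.map f₁ f₂)
      fun s hs => ⟨s.image (Prod.map f₁ f₂), fun v hv w hw => by
        rw [Finset.mem_image] at hv hw
        obtain ⟨v, hv, rfl⟩ := hv
        obtain ⟨w, hw, rfl⟩ := hw
        exact hf _ (hs v hv w hw), fun _ => Finset.mem_image_of_mem _⟩
    have hnat : dF.comp pE₀ = pE₁.comp Ef := by
      ext1 e
      apply Subtype.ext
      change (dF (pE₀ e)).1 = (pE₁ (Ef e)).1
      rw [hdF, hpE₀, hpE₁, hEf, SCpx.pushforward_comp, SCpx.pushforward_comp]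
      rfl
    have hnatT : dFT.comp (pT₀.comp s₀) = (pT₁.comp s₁).comp Ef := by
      ext1 e
      apply Subtype.ext
      change (dFT (pT₀ (s₀ e))).1 = (pT₁ (s₁ (Ef e))).1
      rw [hdFT, hpT₀, hpT₁, SCpx.pushforward_comp, hs₀, hs₁, SCpx.pushforward_comp,
        SCpx.pushforward_comp, hEf, SCpx.pushforward_comp]
      rfl
    have h1 : ((φ₁.comp pE₁).comp (Ef.comp φ₀)).Homotopic (Ef.comp φ₀) :=
      .comp hφ₁r (.refl _)
    have h2 : ((φ₁.comp dF).comp (pE₀.comp φ₀)).Homotopic (φ₁.comp dF) :=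
      .comp (.refl _) hφ₀l
    have h3 : (φ₁.comp pE₁).comp (Ef.comp φ₀) = (φ₁.comp dF).comp (pE₀.comp φ₀) := by
      change φ₁.comp ((pE₁.comp Ef).comp φ₀) = φ₁.comp ((dF.comp pE₀).comp φ₀)
      rw [hnat]
    have h4 : (Ef.comp φ₀).Homotopic (φ₁.comp dF) := h1.symm.trans (h3 ▸ h2)
    have h5 : dFT.comp (pT₀.comp (s₀.comp φ₀)) = (pT₁.comp s₁).comp (Ef.comp φ₀) := by
      change (dFT.comp (pT₀.comp s₀)).comp φ₀ = ((pT₁.comp s₁).comp Ef).comp φ₀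
      rw [hnatT]
    rw [h5]
    exact .comp (.refl (pT₁.comp s₁)) h4
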